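/- Let A : ℝ → ℝ^{n×n} and B : ℝ → ℝ^{n×m} be differentiable at 0 with A(0) Hurwitz, let C ∈ ℝ^{q×n}, and for ε near 0 let P(ε) be the unique solution of A(ε)·P + P·A(ε)ᵀ + B(ε)·B(ε)ᵀ = 0. Then the cost Z(ε) := trace(Cᵀ·C·P(ε)) is differentiable at 0 and Z'(0) = trace(Q·(A'(0)·P(0) + P(0)·A'(0)ᵀ + B'(0)·B(0)ᵀ + B(0)·B'(0)ᵀ)), where Q is the unique solution of A(0)ᵀ·Q + Q·A(0) + Cᵀ·C = 0. -/

import Mathlib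

/-!
With `ℒ X = A X + X Aᵀ`, the equation reads `ℒ(ε) P(ε) = -B(ε) B(ε)ᵀ`. Since no two eigenvalues of
the Hurwitz matrix `A(0)` have sum zero, `ℒ(0)` is injective by the Cayley–Hamilton theorem, so
`ℒ(ε)` is invertible near `0` and `P = -ℒ⁻¹(B Bᵀ)` is differentiable. Differentiating the equation
gives `ℒ(0) P'(0) = -R` with `R = A' P + P A'ᵀ + B' Bᵀ + B B'ᵀ`. The trace pairing turns `ℒ(0)` into
its adjoint `Q ↦ Aᵀ Q + Q A`, whence `trace(Cᵀ C P') = -trace(Q ℒ(0) P') = trace(Q R)`. The same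
argument applies to the Sylvester equation `A P + P E + S = 0`.
-/

open Matrix

attribute [local instance] Matrix.linftyOpNormedAddCommGroup Matrix.linftyOpNormedRing
  Matrix.linftyOpNormedAlgebra Matrix.linftyOpNormedSpace

/-- A real square matrix is Hurwitz if every eigenvalue of it, regarded as a complex
matrix, has negative real part. -/
def Matrix.IsHurwitz {k : Type*} [Fintype k] [DecidableEq k] (A : Matrix k k ℝ) : Prop :=
  ∀ z ∈ spectrum ℂ (A.map (algebraMap ℝ ℂ)), z.re < 0

section Algebra

variable {R m n : Type*} [Fintype m] [Fintype n]

theorem aeval_mul_eq_mul_aeval [CommSemiring R] [DecidableEq m] [DecidableEq n] {A : Matrix n n R}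
    {E : Matrix m m R} {X : Matrix n m R} (hX : A * X = X * E) (p : Polynomial R) :
    Polynomial.aeval A p * X = X * Polynomial.aeval E p := by
  have pow_mul_eq (k : ℕ) : A ^ k * X = X * E ^ k := by
    induction k with
    | zero => simp
    | succ k ih => rw [pow_succ, Matrix.mul_assoc, hX, ← Matrix.mul_assoc, ih, Matrix.mul_assoc,
        pow_succ]
  induction p using Polynomial.induction_on' with
  | add p q hp hq => simp [Matrix.add_mul, Matrix.mul_add, hp, hq]
  | monomial k a => simp [Polynomial.aeval_monomial, Algebra.algebraMap_eq_smul_one, pow_mul_eq]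

variable [CommRing R]

theorem eq_zero_of_mul_eq_mul_of_isCoprime_charpoly [DecidableEq m] [DecidableEq n]
    {A : Matrix n n R} {E : Matrix m m R} {X : Matrix n m R}
    (hAE : IsCoprime A.charpoly E.charpoly) (hX : A * X = X * E) : X = 0 := by
  obtain ⟨u, v, huv⟩ := hAE
  have aeval_eq_one : Polynomial.aeval E (u * A.charpoly) = 1 := by
    simpa [Matrix.aeval_self_charpoly] using congrArg (Polynomial.aeval E) huv
  calc X = X * Polynomial.aeval E (u * A.charpoly) := by rw [aeval_eq_one, Matrix.mul_one]
    _ = Polynomial.aeval A (u * A.charpoly) * X := (aeval_mul_eq_mul_aeval hX _).symm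
    _ = 0 := by rw [map_mul, Matrix.aeval_self_charpoly, mul_zero, Matrix.zero_mul]

theorem trace_mul_eq_trace_mul_of_sylvester {A : Matrix n n R} {E : Matrix m m R}
    {P S : Matrix n m R} {Q W : Matrix m n R} (hP : A * P + P * E + S = 0)
    (hQ : E * Q + Q * A + W = 0) : (W * P).trace = (Q * S).trace := by
  have hW : W = -(E * Q + Q * A) := eq_neg_of_add_eq_zero_right hQ
  have hS : S = -(A * P + P * E) := eq_neg_of_add_eq_zero_right hP
  have trace_cycle : (E * Q * P).trace = (Q * (P * E)).trace := by
    rw [Matrix.mul_assoc, Matrix.trace_mul_comm, Matrix.mul_assoc]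
  rw [hW, hS, Matrix.neg_mul, Matrix.mul_neg, Matrix.trace_neg, Matrix.trace_neg, Matrix.add_mul,
    Matrix.mul_add, Matrix.trace_add, Matrix.trace_add, trace_cycle, Matrix.mul_assoc, add_comm]

end Algebra

section Hurwitz

variable {m n : Type*} [Fintype m] [DecidableEq m] [Fintype n] [DecidableEq n]

theorem isHurwitz_iff_aeval_charpoly {A : Matrix n n ℝ} :
    A.IsHurwitz ↔ ∀ z : ℂ, Polynomial.aeval z A.charpoly = 0 → z.re < 0 := by
  simp only [Matrix.IsHurwitz, Matrix.mem_spectrum_iff_isRoot_charpoly, Matrix.charpoly_map,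
    Polynomial.IsRoot, Polynomial.eval_map_algebraMap]

theorem isHurwitz_transpose {A : Matrix n n ℝ} (hA : A.IsHurwitz) : Aᵀ.IsHurwitz := by
  rwa [isHurwitz_iff_aeval_charpoly, Matrix.charpoly_transpose, ← isHurwitz_iff_aeval_charpoly]

theorem isCoprime_charpoly_neg_of_isHurwitz {A : Matrix n n ℝ} {E : Matrix m m ℝ}
    (hA : A.IsHurwitz) (hE : E.IsHurwitz) : IsCoprime A.charpoly (-E).charpoly := by
  rw [Polynomial.isCoprime_iff_aeval_ne_zero_of_isAlgClosed ℝ ℂ]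
  by_contra! ⟨z, hzA, hzE⟩
  have z_mem : z ∈ spectrum ℂ (-E.map (algebraMap ℝ ℂ)) := by
    rwa [Matrix.mem_spectrum_iff_isRoot_charpoly, ← Matrix.map_neg _ (map_neg _),
      Matrix.charpoly_map, Polynomial.IsRoot, Polynomial.eval_map_algebraMap]
  have neg_z_re : (-z).re < 0 := hE (-z) (by rwa [← Set.mem_neg, spectrum.neg_eq])
  have z_re : z.re < 0 := isHurwitz_iff_aeval_charpoly.1 hA z hzA
  rw [Complex.neg_re] at neg_z_re
  linarith

end Hurwitz

theorem differentiableAt_of_apply_add_eq_zero {𝕜 G E F : Type*} [NontriviallyNormedField 𝕜]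
    [NormedAddCommGroup G] [NormedSpace 𝕜 G] [NormedAddCommGroup E] [NormedSpace 𝕜 E]
    [CompleteSpace E] [NormedAddCommGroup F] [NormedSpace 𝕜 F]
    {T : G → E →L[𝕜] F} {p : G → E} {s : G → F} {x : G} (hT : DifferentiableAt 𝕜 T x)
    (hs : DifferentiableAt 𝕜 s x) (hTx : (T x).IsInvertible)
    (hp : ∀ᶠ t in nhds x, T t (p t) + s t = 0) : DifferentiableAt 𝕜 p x := by
  have inverse_differentiableAt : DifferentiableAt 𝕜 (fun t => (T t).inverse) x :=
    (hTx.contDiffAt_map_inverse.differentiableAt one_ne_zero).comp x hT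
  have eventually_isInvertible : ∀ᶠ t in nhds x, (T t).IsInvertible := by
    obtain ⟨e, he⟩ := hTx
    exact hT.continuousAt.eventually (he ▸ ContinuousLinearEquiv.nhds e)
  refine (inverse_differentiableAt.clm_apply hs.neg).congr_of_eventuallyEq ?_
  filter_upwards [hp, eventually_isInvertible] with t ht hTt
  rw [Pi.neg_apply, ← eq_neg_of_add_eq_zero_left ht, hTt.inverse_apply_self]

section MatrixCalculus

variable {𝕜 l m n : Type*} [NontriviallyNormedField 𝕜]

theorem hasDerivAt_matrix_mul [Finite l] [Fintype m] [Finite n] {A : 𝕜 → Matrix l m 𝕜}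
    {B : 𝕜 → Matrix m n 𝕜} {A' : Matrix l m 𝕜} {B' : Matrix m n 𝕜} {x : 𝕜}
    (hA : HasDerivAt A A' x) (hB : HasDerivAt B B' x) :
    HasDerivAt (fun t => A t * B t) (A' * B x + A x * B') x := by
  have := Fintype.ofFinite l
  have := Fintype.ofFinite n
  rw [add_comm]
  let mulCLM : Matrix l m 𝕜 →L[𝕜] Matrix m n 𝕜 →L[𝕜] Matrix l n 𝕜 :=
    (mulLinearMap 𝕜).mkContinuous₂ 1 fun M N => by
      simpa only [one_mul, mulLinearMap_apply_apply] using Matrix.linfty_opNorm_mul M N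
  exact mulCLM.hasDerivAt_of_bilinear (fun _ => hA) (fun _ => hB)

theorem hasDerivAt_matrix_transpose [Finite m] [Finite n] {A : 𝕜 → Matrix m n 𝕜}
    {A' : Matrix m n 𝕜} {x : 𝕜} (hA : HasDerivAt A A' x) :
    HasDerivAt (fun t => (A t)ᵀ) A'ᵀ x := by
  have := Fintype.ofFinite m
  have := Fintype.ofFinite n
  let transposeCLM : Matrix m n 𝕜 →L[𝕜] Matrix n m 𝕜 :=
    ⟨(Matrix.transposeLinearEquiv m n 𝕜 𝕜).toLinearMap, continuous_id.matrix_transpose⟩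
  exact transposeCLM.hasFDerivAt.comp_hasDerivAt x hA

variable [Fintype m] [Fintype n]

theorem hasDerivAt_matrix_trace {A : 𝕜 → Matrix n n 𝕜} {A' : Matrix n n 𝕜} {x : 𝕜}
    (hA : HasDerivAt A A' x) : HasDerivAt (fun t => (A t).trace) A'.trace x :=
  let traceCLM : Matrix n n 𝕜 →L[𝕜] 𝕜 :=
    ⟨Matrix.traceLinearMap n 𝕜 𝕜, continuous_id.matrix_trace⟩
  traceCLM.hasFDerivAt.comp_hasDerivAt x hA

theorem sylvester_eq_zero_of_hasDerivAt {A : 𝕜 → Matrix n n 𝕜} {E : 𝕜 → Matrix m m 𝕜}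
    {S P : 𝕜 → Matrix n m 𝕜} {A' : Matrix n n 𝕜} {E' : Matrix m m 𝕜} {S' P' : Matrix n m 𝕜}
    {x : 𝕜} (hA : HasDerivAt A A' x) (hE : HasDerivAt E E' x) (hS : HasDerivAt S S' x)
    (hP : HasDerivAt P P' x) (hAPE : ∀ᶠ t in nhds x, A t * P t + P t * E t + S t = 0) :
    A x * P' + P' * E x + (A' * P x + P x * E' + S') = 0 := by
  have hasDerivAt_lhs :=
    ((hasDerivAt_matrix_mul hA hP).add (hasDerivAt_matrix_mul hP hE)).add hS
  have deriv_lhs_eq_zero :=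
    hasDerivAt_lhs.unique ((hasDerivAt_const x 0).congr_of_eventuallyEq hAPE)
  rw [← deriv_lhs_eq_zero]
  abel

variable [CompleteSpace 𝕜]

variable (𝕜 m n) in
/-- The Sylvester operator `X ↦ A * X + X * E`, continuous and linear in the pair `(A, E)` as
well; it is the Lyapunov operator of `A` for `E = Aᵀ`. -/
noncomputable def sylvesterCLM :
    Matrix n n 𝕜 × Matrix m m 𝕜 →L[𝕜] Matrix n m 𝕜 →L[𝕜] Matrix n m 𝕜 :=
  ((mulLinearMap 𝕜).coprod (mulLinearMap 𝕜).flip).toContinuousBilinearMap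

theorem isInvertible_sylvesterCLM [DecidableEq m] [DecidableEq n] {A : Matrix n n 𝕜}
    {E : Matrix m m 𝕜} (hAE : IsCoprime A.charpoly (-E).charpoly) :
    (sylvesterCLM 𝕜 m n (A, E)).IsInvertible := by
  have injective : Function.Injective (sylvesterCLM 𝕜 m n (A, E)).toLinearMap := by
    refine (injective_iff_map_eq_zero _).2 fun X hX => ?_
    refine eq_zero_of_mul_eq_mul_of_isCoprime_charpoly hAE ?_
    rw [Matrix.mul_neg]
    exact eq_neg_of_add_eq_zero_left hX
  exact ⟨(LinearEquiv.ofInjectiveEndo _ injective).toContinuousLinearEquiv, rfl⟩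

theorem differentiableAt_of_sylvester [DecidableEq m] [DecidableEq n] {G : Type*}
    [NormedAddCommGroup G] [NormedSpace 𝕜 G] {A : G → Matrix n n 𝕜} {E : G → Matrix m m 𝕜}
    {S P : G → Matrix n m 𝕜} {x : G} (hA : DifferentiableAt 𝕜 A x)
    (hE : DifferentiableAt 𝕜 E x) (hS : DifferentiableAt 𝕜 S x)
    (hAE : IsCoprime (A x).charpoly (-E x).charpoly)
    (hP : ∀ᶠ t in nhds x, A t * P t + P t * E t + S t = 0) : DifferentiableAt 𝕜 P x := by
  -- The `CompleteSpace` instance on matrices is for the product uniformity, not for the norm.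
  have : @CompleteSpace (Matrix n m 𝕜) PseudoMetricSpace.toUniformSpace :=
    FiniteDimensional.complete 𝕜 (Matrix n m 𝕜)
  exact differentiableAt_of_apply_add_eq_zero
    ((sylvesterCLM 𝕜 m n).differentiableAt.comp x (hA.prodMk hE)) hS
    (isInvertible_sylvesterCLM hAE) hP

end MatrixCalculus

theorem cost_differentiable_and_deriv_general {𝕜 m n : Type*} [NontriviallyNormedField 𝕜]
    [CompleteSpace 𝕜] [Fintype m] [DecidableEq m] [Fintype n] [DecidableEq n]
    {A : 𝕜 → Matrix n n 𝕜} {E : 𝕜 → Matrix m m 𝕜} {S P : 𝕜 → Matrix n m 𝕜}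
    {A' : Matrix n n 𝕜} {E' : Matrix m m 𝕜} {S' : Matrix n m 𝕜} {Q W : Matrix m n 𝕜} {x : 𝕜}
    (hA : HasDerivAt A A' x) (hE : HasDerivAt E E' x) (hS : HasDerivAt S S' x)
    (hAE : IsCoprime (A x).charpoly (-E x).charpoly)
    (hP : ∀ᶠ t in nhds x, A t * P t + P t * E t + S t = 0) (hQ : E x * Q + Q * A x + W = 0) :
    HasDerivAt (fun t => (W * P t).trace) (Q * (A' * P x + P x * E' + S')).trace x := by
  have hP' : HasDerivAt P (deriv P x) x :=
    (differentiableAt_of_sylvester hA.differentiableAt hE.differentiableAt hS.differentiableAt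
      hAE hP).hasDerivAt
  have hZ : HasDerivAt (fun t => (W * P t).trace) (W * deriv P x).trace x := by
    simpa using hasDerivAt_matrix_trace (hasDerivAt_matrix_mul (hasDerivAt_const x W) hP')
  rwa [trace_mul_eq_trace_mul_of_sylvester
    (sylvester_eq_zero_of_hasDerivAt hA hE hS hP' hP) hQ] at hZ

/-- Sensitivity of the LQG-type cost: if `A, B` are differentiable at `0`, `A 0` is
Hurwitz, `P ε` solves the Lyapunov equation `A ε · P + P · (A ε)ᵀ + B ε · (B ε)ᵀ = 0` for
`ε` near `0`, and `Q` solves the dual equation `(A 0)ᵀ Q + Q (A 0) + Cᵀ C = 0`, then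
`Z(ε) := trace(Cᵀ C P ε)` is differentiable at `0` with
`Z'(0) = trace(Q (A'(0) P(0) + P(0) A'(0)ᵀ + B'(0) B(0)ᵀ + B(0) B'(0)ᵀ))`. -/
theorem cost_differentiable_and_deriv {n m q : ℕ}
    (A : ℝ → Matrix (Fin n) (Fin n) ℝ) (B : ℝ → Matrix (Fin n) (Fin m) ℝ)
    (C : Matrix (Fin q) (Fin n) ℝ)
    (hA : DifferentiableAt ℝ A 0) (hB : DifferentiableAt ℝ B 0)
    (hA0 : (A 0).IsHurwitz)
    (P : ℝ → Matrix (Fin n) (Fin n) ℝ)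
    (hP : ∀ᶠ ε in nhds (0 : ℝ), A ε * P ε + P ε * (A ε)ᵀ + B ε * (B ε)ᵀ = 0)
    (Q : Matrix (Fin n) (Fin n) ℝ)
    (hQ : (A 0)ᵀ * Q + Q * A 0 + Cᵀ * C = 0) :
    DifferentiableAt ℝ (fun ε => (Cᵀ * C * P ε).trace) 0 ∧
      deriv (fun ε => (Cᵀ * C * P ε).trace) 0 =
        (Q * (deriv A 0 * P 0 + P 0 * (deriv A 0)ᵀ +
              deriv B 0 * (B 0)ᵀ + B 0 * (deriv B 0)ᵀ)).trace := by
  have hZ := cost_differentiable_and_deriv_general hA.hasDerivAt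
    (hasDerivAt_matrix_transpose hA.hasDerivAt)
    (hasDerivAt_matrix_mul hB.hasDerivAt (hasDerivAt_matrix_transpose hB.hasDerivAt))
    (isCoprime_charpoly_neg_of_isHurwitz hA0 (isHurwitz_transpose hA0)) hP hQ
  exact ⟨hZ.differentiableAt,
    hZ.deriv.trans (congrArg (fun R => (Q * R).trace) (add_assoc _ _ _).symm)⟩
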